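/- With F₁, F₂, F₃ and t as in the context, the following three identities of maps of ℂ hold: F₃∘F₂∘F₂∘t = t∘F₂; F₃∘F₂∘F₂∘F₃∘F₂∘F₂∘F₂∘t = t∘F₁; and F₃∘F₂⁻¹∘F₃⁻¹∘t = t∘F₃. -/

import Mathlib

/-!
Put `e = e^{iπ/5}`. Every coefficient of the maps lies in `ℤ[φ, e]`: the rotation factors are `e`,
`e⁻¹ = φ - e` (because `2 cos (π/5) = φ`) and `e ^ 3`. Hence each identity is an equality of affine
maps with coefficients in `ℤ[φ, e]`, and it follows by polynomial reduction from the two relations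
`φ ^ 2 = φ + 1` and `e ^ 2 = φ e - 1`.
-/

noncomputable section

open Complex

/-- The golden ratio `φ = (1+√5)/2`. -/
def phi : ℝ := (1 + Real.sqrt 5) / 2

/-- `e^{iπ/5}`. -/
def e5 : ℂ := Complex.exp (Real.pi * Complex.I / 5)

/-- `F₁(z) = e^{3iπ/5}·z + 1`. -/
def F1 : ℂ → ℂ := fun z => Complex.exp (3 * Real.pi * Complex.I / 5) * z + 1

/-- `F₂`: the rotation of angle `π/5` about `(1+φ)e^{iπ/5}`. -/
def F2 : ℂ → ℂ := fun z => e5 * (z - (1 + (phi : ℂ)) * e5) + (1 + (phi : ℂ)) * e5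

/-- `F₃(z) = e^{-iπ/5}·z + (φ+1) - (φ+1)e^{iπ/5}`. -/
def F3 : ℂ → ℂ := fun z =>
  Complex.exp (-(Real.pi) * Complex.I / 5) * z + ((phi : ℂ) + 1) - ((phi : ℂ) + 1) * e5

/-- The inverse of `F₂`: the rotation of angle `-π/5` about `(1+φ)e^{iπ/5}`. -/
def F2inv : ℂ → ℂ := fun z =>
  Complex.exp (-(Real.pi) * Complex.I / 5) * (z - (1 + (phi : ℂ)) * e5) + (1 + (phi : ℂ)) * e5

/-- The inverse of `F₃`. -/
def F3inv : ℂ → ℂ := fun z =>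
  Complex.exp (Real.pi * Complex.I / 5) * (z - (((phi : ℂ) + 1) - ((phi : ℂ) + 1) * e5))

/-- The translation `t(z) = z + 2(1+φ)`. -/
def trT : ℂ → ℂ := fun z => z + 2 * (1 + (phi : ℂ))

lemma phi_sq : (phi : ℂ) ^ 2 = phi + 1 := by
  have h : phi ^ 2 = phi + 1 := by
    have h5 : Real.sqrt 5 ^ 2 = 5 := Real.sq_sqrt (by norm_num)
    unfold phi
    linear_combination h5 / 4
  exact_mod_cast h

/-- Since `2 cos (π/5) = φ`, the conjugate `e^{-iπ/5}` equals `φ - e^{iπ/5}`. -/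
lemma exp_neg_eq : Complex.exp (-(Real.pi) * Complex.I / 5) = (phi : ℂ) - e5 := by
  have h := Complex.two_cos ((Real.pi / 5 : ℝ) : ℂ)
  rw [← Complex.ofReal_cos, Real.cos_pi_div_five] at h
  have h1 : ((Real.pi / 5 : ℝ) : ℂ) * I = Real.pi * I / 5 := by push_cast; ring
  have h2 : -((Real.pi / 5 : ℝ) : ℂ) * I = -(Real.pi) * I / 5 := by push_cast; ring
  rw [h1, h2] at h
  have h3 : (phi : ℂ) = 2 * (((1 + Real.sqrt 5) / 4 : ℝ) : ℂ) := by
    unfold phi; push_cast; ring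
  rw [h3, h, e5]
  ring

lemma exp_three_eq : Complex.exp (3 * Real.pi * Complex.I / 5) = e5 ^ 3 := by
  rw [e5, ← Complex.exp_nat_mul]
  congr 1
  push_cast
  ring

/-- The minimal equation of `e^{iπ/5}` over `ℚ(φ)`. -/
lemma e5_sq : e5 ^ 2 = phi * e5 - 1 := by
  have h : e5 * Complex.exp (-(Real.pi) * Complex.I / 5) = 1 := by
    rw [e5, ← Complex.exp_add, ← Complex.exp_zero]
    congr 1
    ring
  rw [exp_neg_eq] at h
  linear_combination -h

/-- The conjugacy identities `F₃∘F₂∘F₂∘t = t∘F₂`, `F₃∘F₂∘F₂∘F₃∘F₂∘F₂∘F₂∘t = t∘F₁` and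
`F₃∘F₂⁻¹∘F₃⁻¹∘t = t∘F₃`. -/
theorem conjugacy_identities :
    (∀ z : ℂ, F3 (F2 (F2 (trT z))) = trT (F2 z)) ∧
    (∀ z : ℂ, F3 (F2 (F2 (F3 (F2 (F2 (F2 (trT z))))))) = trT (F1 z)) ∧
    (∀ z : ℂ, F3 (F2inv (F3inv (trT z))) = trT (F3 z)) := by
  have hp := phi_sq
  have he := e5_sq
  have h0 : Complex.exp (Real.pi * Complex.I / 5) = e5 := rfl
  simp only [F1, F2, F3, F2inv, F3inv, trT, exp_neg_eq, exp_three_eq, h0]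
  generalize (phi : ℂ) = p at *
  generalize e5 = e at *
  refine ⟨fun z => ?_, fun z => ?_, fun z => ?_⟩ <;> grind

end
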